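/- Let G be a connected finite simple graph on vertex set {1,…,n} that is weakly closed with respect to the natural labeling, i.e., for every edge {i,j} of G with i < j and every k with i < k < j, one has {i,k} ∈ E(G) or {k,j} ∈ E(G). Let k be a field of characteristic p > 0 and S = k[X_1,…,X_n,Y_1,…,Y_n]. Then the element f := (Y_1 · [1,2] · [2,3] ⋯ [n−1,n] · X_n)^{p−1} belongs to the colon ideal (J_G^{[p]} : J_G), i.e., f · J_G ⊆ J_G^{[p]}. -/

import Mathlib

open MvPolynomial

variable (K : Type*) [Field K]

/-- The variable `X_i` of `S = k[X_1, …, X_n, Y_1, …, Y_n]`. -/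
noncomputable def Xv {n : ℕ} (i : Fin n) : MvPolynomial (Fin n ⊕ Fin n) K :=
  MvPolynomial.X (Sum.inl i)

/-- The variable `Y_i` of `S = k[X_1, …, X_n, Y_1, …, Y_n]`. -/
noncomputable def Yv {n : ℕ} (i : Fin n) : MvPolynomial (Fin n ⊕ Fin n) K :=
  MvPolynomial.X (Sum.inr i)

/-- The binomial `[i, j] = X_i Y_j - X_j Y_i`. -/
noncomputable def brkt {n : ℕ} (i j : Fin n) : MvPolynomial (Fin n ⊕ Fin n) K :=
  Xv K i * Yv K j - Xv K j * Yv K i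

/-- The binomial edge ideal `J_G = ([i, j] : {i, j} ∈ E(G))`. -/
noncomputable def binomialEdgeIdeal {n : ℕ} (G : SimpleGraph (Fin n)) :
    Ideal (MvPolynomial (Fin n ⊕ Fin n) K) :=
  Ideal.span {f | ∃ i j : Fin n, G.Adj i j ∧ f = brkt K i j}

/-- The `p`-th Frobenius power `I^{[p]}` of an ideal `I`, generated by `{f^p : f ∈ I}`. -/
def frobeniusPower {R : Type*} [CommRing R] (p : ℕ) (I : Ideal R) : Ideal R :=
  Ideal.span ((fun f => f ^ p) '' (I : Set R))

/-- `F(v) = (Y_{v_1} [v_1,v_2] [v_2,v_3] ⋯ [v_{n-1},v_n] X_{v_n})^{p-1}`. -/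
noncomputable def Fpoly {n : ℕ} (p : ℕ) (v : Fin n → Fin n) (hn : 0 < n) :
    MvPolynomial (Fin n ⊕ Fin n) K :=
  (Yv K (v ⟨0, hn⟩) *
      (∏ t : Fin (n - 1),
        brkt K (v ⟨t, by have := t.isLt; omega⟩) (v ⟨(t : ℕ) + 1, by have := t.isLt; omega⟩)) *
      Xv K (v ⟨n - 1, by omega⟩)) ^ (p - 1)

section SwapInvariant

variable {V T : Type*}

/-- An element that commutes past every entry of `M` can be moved from the left of `M` to its
right. -/
theorem swapInvariant_move_right {Φ : List V → T} {A : V → V → Prop}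
    (hΦ : ∀ l₁ l₂ a b, A a b → Φ (l₁ ++ a :: b :: l₂) = Φ (l₁ ++ b :: a :: l₂))
    (a : V) (M : List V) (hM : ∀ x ∈ M, A a x) (l₁ l₂ : List V) :
    Φ (l₁ ++ a :: (M ++ l₂)) = Φ (l₁ ++ (M ++ a :: l₂)) := by
  induction M generalizing l₁ with
  | nil => rfl
  | cons x M ih =>
    have h := ih (fun y hy => hM y (List.mem_cons_of_mem _ hy)) (l₁ ++ [x])
    simp only [List.append_assoc, List.singleton_append] at h
    rw [List.cons_append, List.cons_append, hΦ _ _ _ _ (hM x List.mem_cons_self), h]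

/-- A list can be stably partitioned along `P` using only allowed swaps, provided every pair
that has to be exchanged may be swapped. -/
theorem swapInvariant_partition {Φ : List V → T} {A : V → V → Prop}
    (hΦ : ∀ l₁ l₂ a b, A a b → Φ (l₁ ++ a :: b :: l₂) = Φ (l₁ ++ b :: a :: l₂))
    (P : V → Prop) [DecidablePred P] (M : List V)
    (hM : M.Pairwise fun u d => ¬ P u → P d → A u d) (l₁ l₂ : List V) :
    Φ (l₁ ++ (M ++ l₂)) =
      Φ (l₁ ++ (M.filter (fun x => P x) ++ (M.filter (fun x => ¬ P x) ++ l₂))) := by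
  induction M generalizing l₁ with
  | nil => rfl
  | cons x M ih =>
    rw [List.pairwise_cons] at hM
    have h := ih hM.2 (l₁ ++ [x])
    simp only [List.append_assoc, List.singleton_append] at h
    rw [List.cons_append, h]
    by_cases hx : P x
    · simp [hx]
    · rw [swapInvariant_move_right hΦ x]
      · simp [hx]
      · intro y hy
        rw [List.mem_filter, decide_eq_true_iff] at hy
        exact hM.1 y hy.1 hx hy.2

/-- In a list whose entries `M` between `i` and `j` behave as in a weakly closed graph, `i` and
`j` can be made neighbours by allowed swaps. -/
theorem swapInvariant_exists_adjacent {Φ : List V → T} {A : V → V → Prop}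
    (hA : ∀ a b, A a b → A b a)
    (hΦ : ∀ l₁ l₂ a b, A a b → Φ (l₁ ++ a :: b :: l₂) = Φ (l₁ ++ b :: a :: l₂))
    (i j : V) (M : List V) (hM : M.Pairwise fun u d => ¬ A i u → A i d → A u d)
    (hij : ∀ x ∈ M, ¬ A i x → A x j) (l₁ l₂ : List V) :
    ∃ l₁' l₂', Φ (l₁ ++ i :: (M ++ j :: l₂)) = Φ (l₁' ++ i :: j :: l₂') := by
  classical
  refine ⟨l₁ ++ M.filter (fun x => A i x), M.filter (fun x => ¬ A i x) ++ l₂, ?_⟩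
  have h₁ := swapInvariant_partition hΦ (A i) M hM (l₁ ++ [i]) (j :: l₂)
  have h₂ := swapInvariant_move_right hΦ i (M.filter (fun x => A i x))
    (fun x hx => by simpa using (List.mem_filter.1 hx).2) l₁
    (M.filter (fun x => ¬ A i x) ++ j :: l₂)
  have h₃ := swapInvariant_move_right hΦ j (M.filter (fun x => ¬ A i x))
    (fun x hx => by
      rw [List.mem_filter, decide_eq_true_iff] at hx
      exact hA _ _ (hij x hx.1 hx.2))
    (l₁ ++ M.filter (fun x => A i x) ++ [i]) l₂
  simp only [List.append_assoc, List.singleton_append] at h₁ h₂ h₃ ⊢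
  rw [h₁, h₂, h₃]

end SwapInvariant

section DetChain

variable {R : Type*} [CommRing R]

/-- The determinant of two vectors in `R × R`. -/
def pairDet (u v : R × R) : R := u.1 * v.2 - v.1 * u.2

/-- The product of the determinants of consecutive entries of a list of vectors. -/
def detChain : List (R × R) → R
  | [] => 1
  | [_] => 1
  | a :: b :: l => pairDet a b * detChain (b :: l)

theorem detChain_append_cons (l₁ l₂ : List (R × R)) (a : R × R) :
    detChain (l₁ ++ a :: l₂) = detChain (l₁ ++ [a]) * detChain (a :: l₂) := by
  induction l₁ with
  | nil => simp [detChain]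
  | cons x l ih =>
    cases l with
    | nil => simp [detChain]
    | cons y l =>
      simp only [List.cons_append, detChain] at ih ⊢
      rw [ih, mul_assoc]

/-- Exchanging two neighbouring vectors does not change the `q`-th power of a chain modulo
`[a, b] ^ (q + 1)`. -/
theorem detChain_pow_sub_swap_mem {I : Ideal R} {q : ℕ} (hq : (-1 : R) ^ q = 1) {a b : R × R}
    (hab : pairDet a b ^ (q + 1) ∈ I) (l₁ l₂ : List (R × R)) (c d : R × R) :
    detChain (l₁ ++ c :: a :: b :: d :: l₂) ^ q - detChain (l₁ ++ c :: b :: a :: d :: l₂) ^ q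
      ∈ I := by
  have hba : pairDet b a ^ q = pairDet a b ^ q := by
    rw [show pairDet b a = -1 * pairDet a b by simp only [pairDet]; ring, mul_pow, hq, one_mul]
  obtain ⟨e, he⟩ : pairDet a b ∣
      (pairDet c a * pairDet b d) ^ q - (pairDet c b * pairDet a d) ^ q :=
    (Dvd.intro (-pairDet c d) (by simp only [pairDet]; ring)).trans (sub_dvd_pow_sub_pow _ _ q)
  rw [detChain_append_cons, detChain_append_cons l₁ (b :: _)]
  simp only [detChain]
  have key : (detChain (l₁ ++ [c]) *
        (pairDet c a * (pairDet a b * (pairDet b d * detChain (d :: l₂))))) ^ q -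
      (detChain (l₁ ++ [c]) *
        (pairDet c b * (pairDet b a * (pairDet a d * detChain (d :: l₂))))) ^ q =
      detChain (l₁ ++ [c]) ^ q * detChain (d :: l₂) ^ q * e * pairDet a b ^ (q + 1) := by
    simp only [mul_pow] at he ⊢
    rw [hba]
    linear_combination
      detChain (l₁ ++ [c]) ^ q * detChain (d :: l₂) ^ q * pairDet a b ^ q * he
  rw [key]
  exact I.mul_mem_left _ hab

theorem detChain_cons_ofFn_append (m : ℕ) (f : Fin (m + 1) → R × R) (c d : R × R) :
    detChain (c :: (List.ofFn f ++ [d])) =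
      pairDet c (f 0) * (∏ t : Fin m, pairDet (f t.castSucc) (f t.succ)) *
        pairDet (f (Fin.last m)) d := by
  induction m generalizing c with
  | zero => simp [detChain]
  | succ m ih =>
    rw [List.ofFn_succ, List.cons_append, detChain, ih, Fin.prod_univ_succ]
    simp only [Fin.succ_last, Fin.castSucc_zero, Fin.succ_castSucc]
    ring

end DetChain

theorem brkt_pow_mem_frobeniusPower {n : ℕ} {G : SimpleGraph (Fin n)} {i j : Fin n}
    (h : G.Adj i j) (p : ℕ) :
    brkt K i j ^ p ∈ frobeniusPower p (binomialEdgeIdeal K G) :=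
  Ideal.subset_span ⟨_, Ideal.subset_span ⟨i, j, h, rfl⟩, rfl⟩

/-- The product `Y_{v_1} [v_1, v_2] ⋯ [v_{s-1}, v_s] X_{v_s}` attached to a list of vertices, as a
chain of determinants starting at `(1, 0)` and ending at `(0, 1)`. -/
noncomputable def vertexChain {n : ℕ} (l : List (Fin n)) : MvPolynomial (Fin n ⊕ Fin n) K :=
  detChain ((1, 0) :: (l.map (fun i => (Xv K i, Yv K i)) ++ [(0, 1)]))

theorem Fpoly_id_eq {n p : ℕ} (hn : 0 < n) :
    Fpoly K p id hn = vertexChain K (List.finRange n) ^ (p - 1) := by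
  obtain ⟨m, rfl⟩ := Nat.exists_eq_succ_of_ne_zero hn.ne'
  rw [vertexChain, ← List.ofFn_eq_map, detChain_cons_ofFn_append]
  simp only [Fpoly, pairDet, brkt, id, one_mul, mul_zero, sub_zero, mul_one, zero_mul]
  rfl

theorem brkt_dvd_vertexChain {n : ℕ} (l₁ l₂ : List (Fin n)) (i j : Fin n) :
    brkt K i j ∣ vertexChain K (l₁ ++ i :: j :: l₂) := by
  simp only [vertexChain, List.map_append, List.map_cons, List.append_assoc, List.cons_append]
  rw [← List.cons_append, detChain_append_cons, detChain]
  exact Dvd.dvd.mul_left (Dvd.intro _ rfl) _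

theorem vertexChain_pow_sub_swap_mem {n q : ℕ} (hq : (-1 : MvPolynomial (Fin n ⊕ Fin n) K) ^ q = 1)
    {I : Ideal (MvPolynomial (Fin n ⊕ Fin n) K)} {a b : Fin n} (hab : brkt K a b ^ (q + 1) ∈ I)
    (l₁ l₂ : List (Fin n)) :
    vertexChain K (l₁ ++ a :: b :: l₂) ^ q - vertexChain K (l₁ ++ b :: a :: l₂) ^ q ∈ I := by
  simp only [vertexChain, List.map_append, List.map_cons, List.append_assoc, List.cons_append]
  generalize hN : (l₂.map (fun i => (Xv K i, Yv K i)) ++ [(0, 1)]) = N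
  obtain ⟨L, c, hL⟩ : ∃ L c, ∀ M,
      (1, 0) :: (l₁.map (fun i => (Xv K i, Yv K i)) ++ M) = L ++ c :: M := by
    obtain h | ⟨L, c, h⟩ := List.eq_nil_or_concat ((1, 0) :: l₁.map fun i => (Xv K i, Yv K i))
    · simp at h
    · exact ⟨L, c, fun M => by rw [← List.cons_append, h]; simp⟩
  obtain _ | ⟨d, N⟩ := N
  · simp at hN
  rw [hL, hL]
  exact detChain_pow_sub_swap_mem (a := (Xv K a, Yv K a)) (b := (Xv K b, Yv K b)) hq hab L N c d

/-- The case of a generator of the binomial edge ideal. -/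
theorem Fpoly_mul_brkt_mem {n : ℕ} (G : SimpleGraph (Fin n))
    (hwc : ∀ i j k : Fin n, G.Adj i j → i < k → k < j → G.Adj i k ∨ G.Adj k j)
    {p : ℕ} (hp : p.Prime) [CharP K p] (hn : 0 < n) {i j : Fin n} (hij : G.Adj i j) (hlt : i < j) :
    Fpoly K p id hn * brkt K i j ∈ frobeniusPower p (binomialEdgeIdeal K G) := by
  have : Fact p.Prime := ⟨hp⟩
  have hp1 : p - 1 + 1 = p := Nat.sub_add_cancel hp.one_le
  have hq : (-1 : MvPolynomial (Fin n ⊕ Fin n) K) ^ (p - 1) = 1 := by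
    have h := neg_one_pow_char (MvPolynomial (Fin n ⊕ Fin n) K) p
    rw [← hp1, pow_succ] at h
    simpa using h
  set I := frobeniusPower p (binomialEdgeIdeal K G)
  have hswap : ∀ l₁ l₂ a b, G.Adj a b →
      Ideal.Quotient.mk I (vertexChain K (l₁ ++ a :: b :: l₂) ^ (p - 1)) =
        Ideal.Quotient.mk I (vertexChain K (l₁ ++ b :: a :: l₂) ^ (p - 1)) :=
    fun l₁ l₂ a b hab => Ideal.Quotient.eq.2 <| vertexChain_pow_sub_swap_mem K hq
      (hp1.symm ▸ brkt_pow_mem_frobeniusPower K hab p) l₁ l₂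
  obtain ⟨l₁, l', hl⟩ := List.append_of_mem (List.mem_finRange i)
  have hs : (List.finRange n).Pairwise (· < ·) := List.pairwise_lt_finRange n
  have hj : j ∈ l' := by
    have hj := List.mem_finRange j
    rw [hl] at hs hj
    rcases List.mem_append.1 hj with h | h
    · exact absurd ((List.pairwise_append.1 hs).2.2 j h i List.mem_cons_self) hlt.asymm
    · exact (List.mem_cons.1 h).resolve_left hlt.ne'
  obtain ⟨M, l₂, rfl⟩ := List.append_of_mem hj
  rw [hl, List.pairwise_append, List.pairwise_cons, List.pairwise_append] at hs
  obtain ⟨-, ⟨hi, hM, -, hMj⟩, -⟩ := hs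
  have hiM : ∀ x ∈ M, i < x := fun x hx => hi x (List.mem_append_left _ hx)
  obtain ⟨r₁, r₂, hr⟩ := swapInvariant_exists_adjacent
    (Φ := fun l => Ideal.Quotient.mk I (vertexChain K l ^ (p - 1)))
    (fun _ _ h => h.symm) hswap i j M
    (hM.imp_of_mem fun {u d} hu _ hud hiu hid => (hwc i d u hid (hiM u hu) hud).resolve_left hiu)
    (fun x hx hix =>
      (hwc i j x hij (hiM x hx) (hMj x hx j List.mem_cons_self)).resolve_left hix) l₁ l₂
  rw [Fpoly_id_eq, hl, ← Ideal.Quotient.eq_zero_iff_mem, map_mul]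
  rw [hr, ← map_mul, Ideal.Quotient.eq_zero_iff_mem]
  refine I.mem_of_dvd ?_ (brkt_pow_mem_frobeniusPower K hij p)
  rw [← hp1, pow_succ, hp1]
  exact mul_dvd_mul_right (pow_dvd_pow_of_dvd (brkt_dvd_vertexChain K r₁ r₂ i j) _) _

/-- If `G` is a connected graph on `{1, …, n}` that is weakly closed with respect to the
natural labeling, then `f = (Y_1 [1,2] [2,3] ⋯ [n-1,n] X_n)^{p-1}` belongs to the colon
ideal `(J_G^{[p]} : J_G)`, i.e. `f · J_G ⊆ J_G^{[p]}`. -/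
theorem Fpoly_mem_colon {n : ℕ} (G : SimpleGraph (Fin n)) (hG : G.Connected)
    (hwc : ∀ i j k : Fin n, G.Adj i j → i < k → k < j → G.Adj i k ∨ G.Adj k j)
    (p : ℕ) (hp : p.Prime) [CharP K p] :
    ∀ g ∈ binomialEdgeIdeal K G,
      Fpoly K p id (by obtain ⟨i⟩ := hG.nonempty; have := i.isLt; omega) * g ∈
        frobeniusPower p (binomialEdgeIdeal K G) := by
  intro g hg
  generalize_proofs hn
  induction hg using Submodule.span_induction with
  | mem g hg =>
    obtain ⟨i, j, hij, rfl⟩ := hg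
    rcases lt_or_gt_of_ne hij.ne with h | h
    · exact Fpoly_mul_brkt_mem K G hwc hp hn hij h
    · rw [show brkt K i j = -brkt K j i by simp only [brkt]; ring, mul_neg]
      exact neg_mem (Fpoly_mul_brkt_mem K G hwc hp hn hij.symm h)
  | zero => rw [mul_zero]; exact zero_mem _
  | add x y _ _ hx hy => rw [mul_add]; exact add_mem hx hy
  | smul a x _ hx => rw [smul_eq_mul, mul_left_comm]; exact Ideal.mul_mem_left _ a hx
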